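/- Let P be a polynomial with integer coefficients, let q ≥ 1 and u be integers, and let f: ℝ → ℂ be of class 𝒟 with Fourier coefficients c_k = ∫₀¹ f(ξ)·e(−kξ) dξ. Then for every real x, lim_{K→∞} Σ_{|k|≤K} c_k·e((u/q)·P(k) + x·k) = (1/q)·Σ_{v=0}^{q−1} G(u,v;q)·f(x + v/q), where G(u,v;q) = Σ_{w=0}^{q−1} e((u·P(w) − v·w)/q). -/

import Mathlib

open Filter Finset MeasureTheory

/-- `e(ξ) = exp(2πiξ)`. -/
noncomputable def ee (ξ : ℝ) : ℂ := Complex.exp (2 * Real.pi * Complex.I * ξ)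

/-- A function `f : ℝ → ℂ` is of class `𝒟` if it is `1`-periodic, piecewise
continuously differentiable, and equals the average of its one-sided limits everywhere. -/
def ClassD (f : ℝ → ℂ) : Prop :=
  Function.Periodic f 1 ∧
  (∃ (r : ℕ) (x : ℕ → ℝ), 0 < r ∧ x 0 = 0 ∧ x r = 1 ∧
    (∀ j < r, x j < x (j + 1)) ∧
    (∀ j < r, ∃ g : ℝ → ℂ, ContDiffOn ℝ 1 g (Set.Icc (x j) (x (j + 1))) ∧
      Set.EqOn f g (Set.Ioo (x j) (x (j + 1))))) ∧
  (∀ x : ℝ, ∃ a b : ℂ, Tendsto f (nhdsWithin x (Set.Ioi x)) (nhds a) ∧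
    Tendsto f (nhdsWithin x (Set.Iio x)) (nhds b) ∧ f x = (a + b) / 2)

theorem ee_add (a b : ℝ) : ee (a + b) = ee a * ee b := by
  unfold ee
  rw [← Complex.exp_add]
  congr 1
  push_cast
  ring

theorem ee_zero : ee 0 = 1 := by simp [ee]

theorem ee_int (n : ℤ) : ee n = 1 := by
  unfold ee
  rw [Complex.exp_eq_one_iff]
  exact ⟨n, by push_cast; ring⟩

theorem ee_eq_one_iff (a : ℝ) : ee a = 1 ↔ ∃ n : ℤ, a = n := by
  constructor
  · intro h
    unfold ee at h
    rw [Complex.exp_eq_one_iff] at h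
    obtain ⟨n, hn⟩ := h
    refine ⟨n, ?_⟩
    have hp : (2 * Real.pi * Complex.I : ℂ) ≠ 0 := Complex.two_pi_I_ne_zero
    have h2 : (2 * Real.pi * Complex.I : ℂ) * a = (2 * Real.pi * Complex.I : ℂ) * n := by
      rw [hn]; ring
    have := mul_left_cancel₀ hp h2
    exact_mod_cast this
  · rintro ⟨n, rfl⟩
    exact ee_int n

theorem ee_nat_mul (n : ℕ) (a : ℝ) : ee (n * a) = ee a ^ n := by
  unfold ee
  rw [← Complex.exp_nat_mul]
  congr 1
  push_cast
  ring

theorem ee_cont : Continuous ee := by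
  unfold ee
  fun_prop

theorem ee_norm (a : ℝ) : ‖ee a‖ = 1 := by
  unfold ee
  have : (2 * Real.pi * Complex.I * a : ℂ) = ((2 * Real.pi * a : ℝ) : ℂ) * Complex.I := by
    push_cast; ring
  rw [this, Complex.norm_exp_ofReal_mul_I]

theorem ee_sub_one_norm (t : ℝ) (ht : |t| ≤ 1 / 2) : 4 * |t| ≤ ‖ee t - 1‖ := by
  unfold ee
  have : (2 * Real.pi * Complex.I * t : ℂ) = Complex.I * ((2 * Real.pi * t : ℝ) : ℂ) := by
    push_cast; ring
  rw [this, Complex.norm_exp_I_mul_ofReal_sub_one]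
  have h1 : 2 * Real.pi * t / 2 = Real.pi * t := by ring
  rw [h1, norm_mul, Real.norm_eq_abs, Real.norm_eq_abs]
  have h2 := Real.mul_abs_le_abs_sin (x := Real.pi * t) (by
    rw [abs_mul, abs_of_pos Real.pi_pos]; nlinarith [Real.pi_pos])
  rw [abs_mul, abs_of_pos Real.pi_pos] at h2
  have h3 : 2 / Real.pi * (Real.pi * |t|) = 2 * |t| := by
    field_simp
  rw [h3] at h2
  rw [abs_of_pos (by norm_num : (0:ℝ) < 2)]
  linarith

/-- orthogonality -/
theorem geom_ee (q : ℕ) (hq : 1 ≤ q) (m : ℤ) :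
    ∑ v ∈ Finset.range q, ee ((v : ℝ) * ((m : ℝ) / q)) = if (q : ℤ) ∣ m then (q : ℂ) else 0 := by
  have hq0 : (q : ℝ) ≠ 0 := by positivity
  simp_rw [ee_nat_mul]
  split_ifs with h
  · obtain ⟨n, rfl⟩ := h
    have : ee (((q * n : ℤ) : ℝ) / q) = 1 := by
      rw [ee_eq_one_iff]
      exact ⟨n, by push_cast; field_simp⟩
    rw [this]; simp
  · have hz : ee ((m : ℝ) / q) ≠ 1 := by
      intro h1
      rw [ee_eq_one_iff] at h1
      obtain ⟨n, hn⟩ := h1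
      apply h
      refine ⟨n, ?_⟩
      rw [div_eq_iff hq0] at hn
      have : (m : ℝ) = ((q * n : ℤ) : ℝ) := by rw [hn]; push_cast; ring
      exact_mod_cast this
    rw [geom_sum_eq hz, ← ee_nat_mul]
    have : ee ((q : ℝ) * ((m : ℝ) / q)) = 1 := by
      rw [ee_eq_one_iff]; exact ⟨m, by field_simp⟩
    rw [this]; simp

theorem gauss_expand (P : Polynomial ℤ) (q : ℕ) (hq : 1 ≤ q) (u k : ℤ) :
    ee (((u : ℝ) / (q : ℝ)) * ((P.eval k : ℤ) : ℝ)) =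
      (q : ℂ)⁻¹ * ∑ v ∈ Finset.range q,
        (∑ w ∈ Finset.range q,
          ee (((u * P.eval (w : ℤ) - (v : ℤ) * (w : ℤ) : ℤ) : ℝ) / (q : ℝ))) *
          ee ((v : ℝ) / q * k) := by
  have hq0 : (q : ℝ) ≠ 0 := by positivity
  have hqc : (q : ℂ) ≠ 0 := by exact_mod_cast hq0
  have hqz : (q : ℤ) ≠ 0 := by exact_mod_cast hq0
  rw [eq_inv_mul_iff_mul_eq₀ hqc]
  simp_rw [Finset.sum_mul]
  rw [Finset.sum_comm]
  have key : ∀ w ∈ Finset.range q, ∑ v ∈ Finset.range q,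
      ee (((u * P.eval (w : ℤ) - (v : ℤ) * (w : ℤ) : ℤ) : ℝ) / (q : ℝ)) * ee ((v : ℝ) / q * k)
      = ee (((u : ℝ) / (q : ℝ)) * ((P.eval (w : ℤ) : ℤ) : ℝ)) *
        (if (q : ℤ) ∣ k - w then (q : ℂ) else 0) := by
    intro w _
    rw [← geom_ee q hq, Finset.mul_sum]
    refine Finset.sum_congr rfl fun v _ => ?_
    rw [← ee_add, ← ee_add]
    congr 1
    push_cast
    field_simp
    ring
  rw [Finset.sum_congr rfl key]
  have hm0 := Int.emod_nonneg k hqz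
  have hm1 := Int.emod_lt_of_pos k (by omega : (0:ℤ) < q)
  rw [Finset.sum_eq_single (k % q).toNat]
  · have hw : (((k % q).toNat : ℕ) : ℤ) = k % q := Int.toNat_of_nonneg hm0
    have hd : (q : ℤ) ∣ k - k % q := Int.dvd_self_sub_emod
    rw [hw, if_pos hd, mul_comm]
    congr 1
    obtain ⟨n, hn⟩ := hd.trans (Polynomial.sub_dvd_eval_sub k (k % q) P)
    have : ((u : ℝ) / (q : ℝ)) * ((P.eval k : ℤ) : ℝ) =
        ((u : ℝ) / (q : ℝ)) * ((P.eval (k % q) : ℤ) : ℝ) + ((u * n : ℤ) : ℝ) := by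
      have : P.eval k = P.eval (k % q) + q * n := by omega
      rw [this]
      push_cast
      field_simp
    rw [this, ee_add, ee_int, mul_one]
  · intro w hw hne
    rw [if_neg, mul_zero]
    intro hd
    apply hne
    have hw' := Finset.mem_range.mp hw
    have : k % q = (w : ℤ) % q := Int.emod_eq_emod_iff_emod_sub_eq_zero.mpr
      (Int.emod_eq_zero_of_dvd hd)
    rw [Int.emod_eq_of_lt (a := (w : ℤ)) (by omega) (by omega)] at this
    omega
  · intro h
    exfalso
    apply h
    rw [Finset.mem_range]
    omega

theorem right_lip {f : ℝ → ℂ} (hf : ClassD f) (y : ℝ) :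
    ∃ C δ : ℝ, 0 < δ ∧ 0 ≤ C ∧ ∀ s ∈ Set.Ioo y (y + δ), ∀ t ∈ Set.Ioo y (y + δ),
      ‖f s - f t‖ ≤ C * |s - t| := by
  obtain ⟨hp, ⟨r, x, hr, h0, h1, hlt, hg⟩, -⟩ := hf
  have hex : ∃ n, Int.fract y < x n := ⟨r, by rw [h1]; exact Int.fract_lt_one y⟩
  classical
  obtain ⟨n, hn, hmin⟩ : ∃ n, Int.fract y < x n ∧ ∀ m < n, x m ≤ Int.fract y :=
    ⟨Nat.find hex, Nat.find_spec hex, fun m hm => not_lt.mp (Nat.find_min hex hm)⟩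
  have hn0 : n ≠ 0 := by
    rintro rfl
    rw [h0] at hn
    exact absurd (Int.fract_nonneg y) (not_le.mpr hn)
  obtain ⟨j, rfl⟩ := Nat.exists_eq_succ_of_ne_zero hn0
  have hjr : j < r := by
    by_contra h
    have := hmin r (by omega)
    rw [h1] at this
    exact absurd (Int.fract_lt_one y) (not_lt.mpr this)
  have hj := hmin j (by omega)
  obtain ⟨g, hgc, hge⟩ := hg j hjr
  obtain ⟨C, hC⟩ := hgc.exists_lipschitzOnWith one_ne_zero (convex_Icc _ _) isCompact_Icc
  refine ⟨C, x (j + 1) - Int.fract y, by simpa using hn, C.2, ?_⟩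
  have hsh : ∀ s ∈ Set.Ioo y (y + (x (j + 1) - Int.fract y)),
      s - ⌊y⌋ ∈ Set.Ioo (x j) (x (j + 1)) ∧ f s = g (s - ⌊y⌋) := by
    intro s hs
    have hmem : s - ⌊y⌋ ∈ Set.Ioo (x j) (x (j + 1)) := by
      have := Int.floor_add_fract y
      constructor <;> linarith [hs.1, hs.2]
    refine ⟨hmem, ?_⟩
    rw [← hge hmem]
    have := hp.sub_zsmul_eq (x := s) ⌊y⌋
    simpa using this.symm
  intro s hs t ht
  obtain ⟨hs1, hs2⟩ := hsh s hs
  obtain ⟨ht1, ht2⟩ := hsh t ht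
  rw [hs2, ht2]
  have := hC.dist_le_mul _ (Set.Ioo_subset_Icc_self hs1) _ (Set.Ioo_subset_Icc_self ht1)
  rw [dist_eq_norm, Real.dist_eq] at this
  simpa using this

theorem left_lip {f : ℝ → ℂ} (hf : ClassD f) (y : ℝ) :
    ∃ C δ : ℝ, 0 < δ ∧ 0 ≤ C ∧ ∀ s ∈ Set.Ioo (y - δ) y, ∀ t ∈ Set.Ioo (y - δ) y,
      ‖f s - f t‖ ≤ C * |s - t| := by
  obtain ⟨hp, ⟨r, x, hr, h0, h1, hlt, hg⟩, -⟩ := hf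
  obtain ⟨z, N, hz0, hz1, hzy⟩ : ∃ (z : ℝ) (N : ℤ), 0 < z ∧ z ≤ 1 ∧ y = N + z := by
    refine ⟨y - (⌈y⌉ - 1 : ℤ), ⌈y⌉ - 1, ?_, ?_, ?_⟩
    · push_cast; linarith [Int.ceil_lt_add_one y]
    · push_cast; linarith [Int.le_ceil y]
    · ring
  have hex : ∃ n, z ≤ x n := ⟨r, by rw [h1]; exact hz1⟩
  classical
  obtain ⟨n, hn, hmin⟩ : ∃ n, z ≤ x n ∧ ∀ m < n, x m < z :=
    ⟨Nat.find hex, Nat.find_spec hex, fun m hm => not_le.mp (Nat.find_min hex hm)⟩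
  have hn0 : n ≠ 0 := by
    rintro rfl
    rw [h0] at hn
    linarith
  obtain ⟨j, rfl⟩ := Nat.exists_eq_succ_of_ne_zero hn0
  have hjr : j < r := by
    by_contra h
    have := hmin r (by omega)
    rw [h1] at this
    linarith
  have hj := hmin j (by omega)
  obtain ⟨g, hgc, hge⟩ := hg j hjr
  obtain ⟨C, hC⟩ := hgc.exists_lipschitzOnWith one_ne_zero (convex_Icc _ _) isCompact_Icc
  refine ⟨C, z - x j, by linarith, C.2, ?_⟩
  have hsh : ∀ s ∈ Set.Ioo (y - (z - x j)) y,
      s - N ∈ Set.Ioo (x j) (x (j + 1)) ∧ f s = g (s - N) := by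
    intro s hs
    have hmem : s - N ∈ Set.Ioo (x j) (x (j + 1)) := by
      have hn' : z ≤ x (j + 1) := hn
      constructor <;> linarith [hs.1, hs.2]
    refine ⟨hmem, ?_⟩
    rw [← hge hmem]
    have := hp.sub_zsmul_eq (x := s) N
    simpa using this.symm
  intro s hs t ht
  obtain ⟨hs1, hs2⟩ := hsh s hs
  obtain ⟨ht1, ht2⟩ := hsh t ht
  rw [hs2, ht2]
  have := hC.dist_le_mul _ (Set.Ioo_subset_Icc_self hs1) _ (Set.Ioo_subset_Icc_self ht1)
  rw [dist_eq_norm, Real.dist_eq] at this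
  simpa using this

theorem h_bound {f : ℝ → ℂ} (hf : ClassD f) (y : ℝ) :
    ∃ C δ : ℝ, 0 < δ ∧ 0 ≤ C ∧ ∀ t : ℝ, |t| < δ →
      ‖f (y + t) + f (y - t) - 2 * f y‖ ≤ C * |t| := by
  obtain ⟨C1, d1, hd1, hC1, H1⟩ := right_lip hf y
  obtain ⟨C2, d2, hd2, hC2, H2⟩ := left_lip hf y
  obtain ⟨a, b, ha, hb, hab⟩ := hf.2.2 y
  have K1 : ∀ s ∈ Set.Ioo y (y + d1), ‖f s - a‖ ≤ C1 * |s - y| := by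
    intro s hs
    have e1 : Tendsto (fun t => ‖f s - f t‖) (nhdsWithin y (Set.Ioi y)) (nhds ‖f s - a‖) :=
      (tendsto_const_nhds.sub ha).norm
    have e2 : Tendsto (fun t => C1 * |s - t|) (nhdsWithin y (Set.Ioi y)) (nhds (C1 * |s - y|)) :=
      (Continuous.tendsto (by fun_prop) y).mono_left nhdsWithin_le_nhds
    refine le_of_tendsto_of_tendsto e1 e2 ?_
    filter_upwards [Ioo_mem_nhdsGT (show y < y + d1 by linarith)] with t ht using H1 s hs t ht
  have K2 : ∀ s ∈ Set.Ioo (y - d2) y, ‖f s - b‖ ≤ C2 * |s - y| := by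
    intro s hs
    have e1 : Tendsto (fun t => ‖f s - f t‖) (nhdsWithin y (Set.Iio y)) (nhds ‖f s - b‖) :=
      (tendsto_const_nhds.sub hb).norm
    have e2 : Tendsto (fun t => C2 * |s - t|) (nhdsWithin y (Set.Iio y)) (nhds (C2 * |s - y|)) :=
      (Continuous.tendsto (by fun_prop) y).mono_left nhdsWithin_le_nhds
    refine le_of_tendsto_of_tendsto e1 e2 ?_
    filter_upwards [Ioo_mem_nhdsLT (show y - d2 < y by linarith)] with t ht using H2 s hs t ht
  have pos : ∀ t : ℝ, 0 < t → t < min d1 d2 →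
      ‖f (y + t) + f (y - t) - 2 * f y‖ ≤ (C1 + C2) * t := by
    intro t ht htd
    have t1 := lt_min_iff.mp htd
    have k1 := K1 (y + t) ⟨by linarith, by linarith⟩
    have k2 := K2 (y - t) ⟨by linarith, by linarith⟩
    have q1 : |y + t - y| = t := by rw [add_sub_cancel_left, abs_of_pos ht]
    have q2 : |y - t - y| = t := by rw [sub_sub_cancel_left, abs_neg, abs_of_pos ht]
    rw [q1] at k1
    rw [q2] at k2
    have : f (y + t) + f (y - t) - 2 * f y = (f (y + t) - a) + (f (y - t) - b) := by
      rw [hab]; ring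
    rw [this]
    refine (norm_add_le _ _).trans ?_
    linarith
  refine ⟨C1 + C2, min d1 d2, lt_min hd1 hd2, by linarith, fun t ht => ?_⟩
  rcases lt_trichotomy t 0 with h | h | h
  · rw [abs_of_neg h] at ht ⊢
    have := pos (-t) (by linarith) ht
    rw [sub_neg_eq_add, ← sub_eq_add_neg, add_comm (f (y - t))] at this
    exact this
  · subst h
    simp; ring_nf
  · rw [abs_of_pos h] at ht ⊢
    exact pos t h ht

theorem classD_int {f : ℝ → ℂ} (hf : ClassD f) (a b : ℝ) : IntervalIntegrable f volume a b := by
  obtain ⟨hp, ⟨r, x, hr, h0, h1, hlt, hg⟩, -⟩ := hf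
  have : IntervalIntegrable f volume (x 0) (x r) := by
    apply IntervalIntegrable.trans_iterate
    intro k hk
    obtain ⟨g, hgc, hge⟩ := hg k hk
    have hle := (hlt k hk).le
    have gi : IntervalIntegrable g volume (x k) (x (k + 1)) := by
      apply ContinuousOn.intervalIntegrable
      rw [Set.uIcc_of_le hle]
      exact hgc.continuousOn
    rw [intervalIntegrable_iff_integrableOn_Ioo_of_le hle] at gi ⊢
    exact gi.congr_fun hge.symm measurableSet_Ioo
  rw [h0, h1] at this
  exact hp.intervalIntegrable₀ one_ne_zero this a b

theorem sum_Icc_step (a : ℤ → ℂ) (K : ℕ) :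
    ∑ k ∈ Finset.Icc (-((K + 1 : ℕ) : ℤ)) ((K + 1 : ℕ) : ℤ), a k =
      a (-((K : ℤ) + 1)) + (a ((K : ℤ) + 1) + ∑ k ∈ Finset.Icc (-(K : ℤ)) (K : ℤ), a k) := by
  have : Finset.Icc (-((K + 1 : ℕ) : ℤ)) ((K + 1 : ℕ) : ℤ) =
      insert (-((K : ℤ) + 1)) (insert ((K : ℤ) + 1) (Finset.Icc (-(K : ℤ)) (K : ℤ))) := by
    ext k
    simp only [Finset.mem_insert, Finset.mem_Icc]
    push_cast
    omega
  rw [this, Finset.sum_insert, Finset.sum_insert]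
  · simp
  · simp only [Finset.mem_insert, Finset.mem_Icc]
    omega

theorem sum_Icc_neg (a : ℤ → ℂ) (K : ℕ) :
    ∑ k ∈ Finset.Icc (-(K : ℤ)) (K : ℤ), a (-k) = ∑ k ∈ Finset.Icc (-(K : ℤ)) (K : ℤ), a k := by
  induction K with
  | zero => simp
  | succ K ih => rw [sum_Icc_step, sum_Icc_step, ih, neg_neg]; ring

theorem sum_Icc_tele (G : ℤ → ℂ) (K : ℕ) :
    ∑ k ∈ Finset.Icc (-(K : ℤ)) (K : ℤ), (G (k - 1) - G k) = G (-(K : ℤ) - 1) - G K := by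
  induction K with
  | zero => simp
  | succ K ih =>
    rw [sum_Icc_step, ih]
    have : (K : ℤ) + 1 - 1 = K := by ring
    rw [this]
    push_cast
    have : -(K : ℤ) - 1 = -((K : ℤ) + 1) := by ring
    rw [this]
    ring

theorem c_shift {f : ℝ → ℂ} (hp : Function.Periodic f 1) (y : ℝ) (k : ℤ) :
    ∫ t in (-(1 / 2) : ℝ)..(1 / 2), f (y + t) * ee (-(k : ℝ) * t) =
      (∫ ξ in (0 : ℝ)..(1 : ℝ), f ξ * ee (-(k : ℝ) * ξ)) * ee (y * k) := by
  have e1 : ∀ t : ℝ, f (y + t) * ee (-(k : ℝ) * t) =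
      (fun ξ => f ξ * ee (-(k : ℝ) * ξ)) (y + t) * ee (y * k) := by
    intro t
    simp only
    rw [mul_assoc, ← ee_add]
    congr 2
    ring
  have per : Function.Periodic (fun ξ => f ξ * ee (-(k : ℝ) * ξ)) 1 := by
    intro ξ
    simp only
    rw [hp ξ]
    have : -(k : ℝ) * (ξ + 1) = -(k : ℝ) * ξ + ((-k : ℤ) : ℝ) := by push_cast; ring
    rw [this, ee_add, ee_int, mul_one]
  simp_rw [e1]
  rw [intervalIntegral.integral_mul_const,
    intervalIntegral.integral_comp_add_left (fun ξ => f ξ * ee (-(k : ℝ) * ξ))]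
  have := per.intervalIntegral_add_eq (y + -(1 / 2)) 0
  rw [zero_add] at this
  rw [← this]
  congr 2
  ring

theorem c_refl {f : ℝ → ℂ} (hp : Function.Periodic f 1) (y : ℝ) (k : ℤ) :
    ∫ t in (-(1 / 2) : ℝ)..(1 / 2), f (y - t) * ee (-(k : ℝ) * t) =
      (∫ ξ in (0 : ℝ)..(1 : ℝ), f ξ * ee (-((-k : ℤ) : ℝ) * ξ)) * ee (y * ((-k : ℤ) : ℝ)) := by
  rw [← c_shift hp y (-k)]
  have := intervalIntegral.integral_comp_neg (a := -(1 / 2)) (b := 1 / 2)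
    (fun t => f (y + t) * ee (-((-k : ℤ) : ℝ) * t))
  rw [neg_neg] at this
  rw [← this]
  refine intervalIntegral.integral_congr fun t _ => ?_
  rw [← sub_eq_add_neg]
  congr 2
  push_cast
  ring

theorem c_const (k : ℤ) :
    ∫ t in (-(1 / 2) : ℝ)..(1 / 2), ee (-(k : ℝ) * t) = if k = 0 then 1 else 0 := by
  split_ifs with h
  · subst h
    simp [ee_zero]
    norm_num
  · have hk : (k : ℂ) ≠ 0 := by exact_mod_cast h
    have hc : (-(2 * Real.pi * Complex.I) * k : ℂ) ≠ 0 :=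
      mul_ne_zero (neg_ne_zero.mpr Complex.two_pi_I_ne_zero) hk
    have e1 : ∀ t : ℝ, ee (-(k : ℝ) * t) =
        Complex.exp ((-(2 * Real.pi * Complex.I) * k : ℂ) * t) := by
      intro t
      unfold ee
      congr 1
      push_cast
      ring
    simp_rw [e1]
    rw [integral_exp_mul_complex hc, ← e1, ← e1]
    have : -(k : ℝ) * -(1 / 2) = -(k : ℝ) * (1 / 2) + (k : ℤ) := by ring
    rw [this, ee_add, ee_int]
    simp

theorem rl (g : ℝ → ℂ) (φ : ℕ → ℤ) (hφ : Tendsto (fun n => (φ n : ℝ)) atTop (cocompact ℝ)) :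
    Tendsto (fun n => ∫ t in (-(1 / 2) : ℝ)..(1 / 2), g t * ee (-(φ n : ℝ) * t)) atTop
      (nhds 0) := by
  have := (Real.tendsto_integral_exp_smul_cocompact
    ((Set.Ioc (-(1 / 2) : ℝ) (1 / 2)).indicator g)).comp hφ
  refine this.congr fun n => ?_
  rw [intervalIntegral.integral_of_le (by norm_num), ← integral_indicator measurableSet_Ioc]
  simp only [Function.comp]
  congr 1
  ext t
  by_cases ht : t ∈ Set.Ioc (-(1 / 2) : ℝ) (1 / 2)
  · rw [Set.indicator_of_mem ht, Set.indicator_of_mem ht, Circle.smul_def, Real.fourierChar_apply,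
      smul_eq_mul, mul_comm]
    unfold ee
    congr 2
    push_cast
    ring
  · rw [Set.indicator_of_notMem ht, Set.indicator_of_notMem ht, smul_zero]

theorem dirichlet {f : ℝ → ℂ} (hf : ClassD f) (y : ℝ) :
    Tendsto (fun K : ℕ => ∑ k ∈ Finset.Icc (-(K : ℤ)) (K : ℤ),
      (∫ ξ in (0 : ℝ)..(1 : ℝ), f ξ * ee (-(k : ℝ) * ξ)) * ee (y * (k : ℝ))) atTop
      (nhds (f y)) := by
  have hp := hf.1
  obtain ⟨C, δ, hδ, hC, hb⟩ := h_bound hf y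
  set h : ℝ → ℂ := fun t => f (y + t) + f (y - t) - 2 * f y with hh
  set g : ℝ → ℂ := fun t => h t / (ee t - 1) with hg
  have i1 : IntervalIntegrable (fun t => f (y + t)) volume (-(1 / 2)) (1 / 2) := by
    have := (classD_int hf (y + -(1/2)) (y + 1/2)).comp_add_left y
    convert this using 1 <;> ring
  have i2 : IntervalIntegrable (fun t => f (y - t)) volume (-(1 / 2)) (1 / 2) := by
    have := (classD_int hf (y - -(1/2)) (y - 1/2)).comp_sub_left y
    convert this using 1 <;> ring
  have ih : IntervalIntegrable h volume (-(1 / 2)) (1 / 2) :=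
    (i1.add i2).sub intervalIntegrable_const
  have ee1 : ∀ t ∈ Set.Icc (-(1 / 2) : ℝ) (1 / 2), 4 * |t| ≤ ‖ee t - 1‖ := fun t ht =>
    ee_sub_one_norm t (abs_le.mpr ht)
  have hle : (-(1 / 2) : ℝ) ≤ 1 / 2 := by norm_num
  have ig : IntervalIntegrable g volume (-(1 / 2)) (1 / 2) := by
    have dom : IntervalIntegrable (fun t => C + δ⁻¹ * ‖h t‖) volume (-(1 / 2)) (1 / 2) :=
      intervalIntegrable_const.add (ih.norm.const_mul _)
    refine dom.mono_fun ?_ ?_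
    · have m1 : AEStronglyMeasurable h (volume.restrict (Set.uIoc (-(1 / 2) : ℝ) (1 / 2))) :=
        ih.aestronglyMeasurable_restrict_uIoc
      exact (m1.aemeasurable.div
        (ee_cont.measurable.sub_const 1).aemeasurable).aestronglyMeasurable
    · rw [Set.uIoc_of_le hle]
      filter_upwards [ae_restrict_mem measurableSet_Ioc] with t ht
      have h4 := ee1 t (Set.Ioc_subset_Icc_self ht)
      have hn : (0 : ℝ) ≤ C + δ⁻¹ * ‖h t‖ := by positivity
      rw [Real.norm_of_nonneg hn]
      simp only [hg]
      rw [norm_div]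
      rcases lt_or_ge |t| δ with hd | hd
      · have := hb t hd
        have h5 : ‖h t‖ / ‖ee t - 1‖ ≤ C := by
          refine div_le_of_le_mul₀ (norm_nonneg _) hC (this.trans ?_)
          exact mul_le_mul_of_nonneg_left (by linarith [abs_nonneg t]) hC
        have h6 : 0 ≤ δ⁻¹ * ‖h t‖ := by positivity
        linarith
      · have h7 : δ ≤ ‖ee t - 1‖ := by linarith [abs_nonneg t]
        have : ‖h t‖ / ‖ee t - 1‖ ≤ δ⁻¹ * ‖h t‖ := by
          rw [div_eq_inv_mul]
          gcongr
        linarith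
  have ic : ∀ {F : ℝ → ℂ} (k : ℤ), IntervalIntegrable F volume (-(1 / 2)) (1 / 2) →
      IntervalIntegrable (fun t => F t * ee (-(k : ℝ) * t)) volume (-(1 / 2)) (1 / 2) := by
    intro F k hF
    exact hF.mul_continuousOn (ee_cont.comp (by fun_prop)).continuousOn
  have hhg : ∀ t ∈ Set.uIcc (-(1 / 2) : ℝ) (1 / 2), h t = g t * (ee t - 1) := by
    intro t ht
    rw [Set.uIcc_of_le hle] at ht
    by_cases h0 : ee t - 1 = 0
    · have := ee1 t ht
      rw [h0, norm_zero] at this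
      have t0 : t = 0 := abs_eq_zero.mp (by linarith [abs_nonneg t])
      rw [h0, mul_zero, t0]
      simp only [hh]
      rw [add_zero, sub_zero]
      ring
    · simp only [hg]
      rw [div_mul_cancel₀ _ h0]
  set G : ℤ → ℂ := fun k => ∫ t in (-(1 / 2) : ℝ)..(1 / 2), g t * ee (-(k : ℝ) * t) with hG
  set S : ℤ → ℂ := fun k =>
    (∫ ξ in (0 : ℝ)..(1 : ℝ), f ξ * ee (-(k : ℝ) * ξ)) * ee (y * (k : ℝ)) with hS
  have A : ∀ k : ℤ, S k + S (-k) - 2 * f y * (if k = 0 then 1 else 0) = G (k - 1) - G k := by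
    intro k
    have l1 : S k + S (-k) - 2 * f y * (if k = 0 then 1 else 0) =
        ∫ t in (-(1 / 2) : ℝ)..(1 / 2), h t * ee (-(k : ℝ) * t) := by
      simp only [hS]
      rw [← c_shift hp, ← c_refl hp, ← c_const, ← intervalIntegral.integral_const_mul,
        ← intervalIntegral.integral_add (ic k i1) (ic k i2),
        ← intervalIntegral.integral_sub ((ic k i1).add (ic k i2))
          (ic k (F := fun _ => 2 * f y) intervalIntegrable_const)]
      congr 1
      ext t
      simp only [hh]
      ring
    rw [l1]
    simp only [hG]
    rw [← intervalIntegral.integral_sub (ic _ ig) (ic _ ig)]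
    refine intervalIntegral.integral_congr fun t ht => ?_
    rw [hhg t ht]
    have : -((k - 1 : ℤ) : ℝ) * t = t + -(k : ℝ) * t := by push_cast; ring
    rw [this, ee_add]
    ring
  have B : ∀ K : ℕ, ∑ k ∈ Finset.Icc (-(K : ℤ)) (K : ℤ), S k =
      f y + (G (-(K : ℤ) - 1) - G K) / 2 := by
    intro K
    have := sum_Icc_tele G K
    rw [← this, ← Finset.sum_congr rfl fun k _ => A k, Finset.sum_sub_distrib,
      Finset.sum_add_distrib, sum_Icc_neg, ← Finset.mul_sum, Finset.sum_ite_eq', if_pos (by simp)]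
    ring
  have r1 : Tendsto (fun K : ℕ => G (-(K : ℤ) - 1)) atTop (nhds 0) := by
    refine rl g (fun K : ℕ => -(K : ℤ) - 1) ?_
    refine Tendsto.mono_right ?_ atBot_le_cocompact
    push_cast
    have : Tendsto (fun n : ℕ => -(n : ℝ)) atTop atBot :=
      tendsto_neg_atTop_atBot.comp tendsto_natCast_atTop_atTop
    exact tendsto_atBot_add_const_right _ (-1) this
  have r2 : Tendsto (fun K : ℕ => G K) atTop (nhds 0) := by
    refine rl g (fun K : ℕ => (K : ℤ)) ?_
    refine Tendsto.mono_right ?_ atTop_le_cocompact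
    push_cast
    exact tendsto_natCast_atTop_atTop
  have := (tendsto_const_nhds (x := f y)).add ((r1.sub r2).div_const 2)
  simp only [sub_self, zero_div, add_zero] at this
  exact this.congr fun K => (B K).symm

/-- for `f` of class `𝒟` with Fourier coefficients
`c_k = ∫₀¹ f(ξ)e(-kξ)dξ`, and `P` an integer polynomial, at rational time `u/q`
the symmetric partial sums `Σ_{|k|≤K} c_k e((u/q)P(k) + xk)` converge to
`(1/q)Σ_v G(u,v;q) f(x + v/q)`, where `G(u,v;q) = Σ_w e((uP(w) - vw)/q)`. -/
theorem stmt9 (P : Polynomial ℤ) (q : ℕ) (hq : 1 ≤ q) (u : ℤ) (f : ℝ → ℂ)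
    (hf : ClassD f) (x : ℝ) :
    Tendsto
      (fun K : ℕ => ∑ k ∈ Finset.Icc (-(K : ℤ)) (K : ℤ),
        (∫ ξ in (0 : ℝ)..(1 : ℝ), f ξ * ee (-(k : ℝ) * ξ)) *
          ee (((u : ℝ) / (q : ℝ)) * ((P.eval k : ℤ) : ℝ) + x * (k : ℝ)))
      atTop
      (nhds ((q : ℂ)⁻¹ * ∑ v ∈ Finset.range q,
        (∑ w ∈ Finset.range q,
          ee (((u * P.eval (w : ℤ) - (v : ℤ) * (w : ℤ) : ℤ) : ℝ) / (q : ℝ))) *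
          f (x + (v : ℝ) / (q : ℝ)))) := by
  have T := (tendsto_finsetSum (Finset.range q) fun v _ =>
    (dirichlet hf (x + (v : ℝ) / (q : ℝ))).const_mul
      (∑ w ∈ Finset.range q,
          ee (((u * P.eval (w : ℤ) - (v : ℤ) * (w : ℤ) : ℤ) : ℝ) / (q : ℝ)))).const_mul (q : ℂ)⁻¹
  refine T.congr fun K => ?_
  simp_rw [Finset.mul_sum (Finset.Icc (-(K : ℤ)) (K : ℤ))]
  rw [Finset.sum_comm, Finset.mul_sum]
  refine Finset.sum_congr rfl fun k _ => ?_
  rw [ee_add, gauss_expand P q hq u k, Finset.mul_sum, Finset.mul_sum, Finset.sum_mul,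
    Finset.mul_sum]
  refine Finset.sum_congr rfl fun v _ => ?_
  rw [add_mul x, ee_add]
  ring
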